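/- (Lemma on commutation criteria, pointwise form.) Let φ ∈ Δ be a unit spinor, S ∈ End(ℝ^6), η a linear functional on ℝ^6, and set ν(x) := S(x)·φ + η(x)·j(φ) for x ∈ ℝ^6. Then S commutes with J_φ (S∘J_φ = J_φ∘S) if and only if ⟨(J_φ y)·ν(x), φ⟩ = −⟨y·ν(J_φ x), φ⟩ for all x, y ∈ ℝ^6, and S anti-commutes with J_φ (S∘J_φ = −J_φ∘S) if and only if ⟨(J_φ y)·ν(x), φ⟩ = ⟨y·ν(J_φ x), φ⟩ for all x, y ∈ ℝ^6. -/

import Mathlib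

open RealInnerProductSpace

noncomputable section

/-- The spin representation space Δ = ℝ^8. -/
abbrev Δ : Type := EuclideanSpace ℝ (Fin 8)

/-- The standard skew endomorphism E_{ij} of ℝ^8: u_i ↦ u_j, u_j ↦ -u_i, others ↦ 0. -/
def E (i j : Fin 8) : Δ →ₗ[ℝ] Δ where
  toFun v := v i • EuclideanSpace.single j (1 : ℝ) - v j • EuclideanSpace.single i (1 : ℝ)
  map_add' x y := by
    simp only [PiLp.add_apply, add_smul]
    module
  map_smul' c x := by
    simp only [PiLp.smul_apply, smul_eq_mul, RingHom.id_apply, mul_smul]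
    module

/-- The seven Clifford endomorphisms e_1, …, e_7 (indexed 0,…,6). -/
def cliff : Fin 7 → (Δ →ₗ[ℝ] Δ) :=
  ![  E 0 7 + E 1 6 - E 2 5 - E 3 4,
    - E 0 6 + E 1 7 + E 2 4 - E 3 5,
    - E 0 5 + E 1 4 - E 2 7 + E 3 6,
    - E 0 4 - E 1 5 - E 2 6 - E 3 7,
    - E 0 2 - E 1 3 + E 4 6 + E 5 7,
      E 0 3 - E 1 2 - E 4 7 + E 5 6,
      E 0 1 - E 2 3 - E 4 5 + E 6 7]

/-- j = e_1 ∘ e_2 ∘ e_3 ∘ e_4 ∘ e_5 ∘ e_6. -/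
def jmap : Δ →ₗ[ℝ] Δ :=
  cliff 0 ∘ₗ cliff 1 ∘ₗ cliff 2 ∘ₗ cliff 3 ∘ₗ cliff 4 ∘ₗ cliff 5

/-- Clifford multiplication of a vector x ∈ ℝ^6 on a spinor. -/
def cm6 (x : EuclideanSpace ℝ (Fin 6)) (φ : Δ) : Δ :=
  ∑ i : Fin 6, x i • cliff i.castSucc φ

/-- Clifford multiplication of a vector x ∈ ℝ^7 on a spinor. -/
def cm7 (x : EuclideanSpace ℝ (Fin 7)) (φ : Δ) : Δ :=
  ∑ i : Fin 7, x i • cliff i φ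

/-!
Everything rests on `x ↦ x·φ` being a similarity `ℝ⁶ → Δ`: polarizing `x·x·φ = -‖x‖² φ` and using
that Clifford multiplication is skew gives `⟨x·φ, y·φ⟩ = ⟨x, y⟩ ‖φ‖²`. The volume element `j` equals
`-e₇`, so it is skew and anticommutes with vectors. Skewness makes `J_φ` skew, and anticommutation
makes `j φ` orthogonal to every `x·φ`. Hence `⟨y·ν(x), φ⟩ = -⟨S x, y⟩ ‖φ‖²`, and both criteria
say that `⟨S x, J_φ y⟩ = ∓⟨S (J_φ x), y⟩`, where `J_φ` may be moved across the inner product.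
-/

section SkewAdjoint

variable {V : Type*} [NormedAddCommGroup V] [InnerProductSpace ℝ V] {f g : Module.End ℝ V}

lemma mem_skewAdjointSubmodule_innerₗ :
    f ∈ (innerₗ V).skewAdjointSubmodule ↔ ∀ v w, ⟪f v, w⟫ = -⟪v, f w⟫ := by
  simp only [LinearMap.mem_skewAdjointSubmodule, LinearMap.IsSkewAdjoint,
    LinearMap.IsAdjointPair, innerₗ_apply_apply, Pi.neg_apply, inner_neg_right]

lemma inner_map_left_of_mem_skewAdjoint (hf : f ∈ (innerₗ V).skewAdjointSubmodule) (v w : V) :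
    ⟪f v, w⟫ = -⟪v, f w⟫ :=
  mem_skewAdjointSubmodule_innerₗ.mp hf v w

lemma inner_map_map_eq_zero_of_anticomm (hf : f ∈ (innerₗ V).skewAdjointSubmodule)
    (hg : g ∈ (innerₗ V).skewAdjointSubmodule) {v : V} (hfg : f (g v) = -g (f v)) :
    ⟪f v, g v⟫ = 0 := by
  have h : ⟪f v, g v⟫ = -⟪f v, g v⟫ := calc
    ⟪f v, g v⟫ = ⟪v, g (f v)⟫ := by
      rw [inner_map_left_of_mem_skewAdjoint hf, hfg, inner_neg_right, neg_neg]
    _ = -⟪g v, f v⟫ := by rw [inner_map_left_of_mem_skewAdjoint hg, neg_neg]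
    _ = -⟪f v, g v⟫ := by rw [real_inner_comm]
  linarith

lemma eq_comp_iff_inner_of_mem_skewAdjoint (hf : f ∈ (innerₗ V).skewAdjointSubmodule)
    (S T : Module.End ℝ V) :
    T = f ∘ₗ S ↔ ∀ v w, ⟪S v, f w⟫ = -⟪T v, w⟫ := by
  have key (v w : V) : ⟪S v, f w⟫ = -⟪T v, w⟫ ↔ ⟪T v, w⟫ = ⟪(f ∘ₗ S) v, w⟫ := by
    rw [LinearMap.comp_apply, inner_map_left_of_mem_skewAdjoint hf, eq_neg_iff_add_eq_zero,
      eq_neg_iff_add_eq_zero, add_comm]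
  simp only [key]
  exact ⟨fun h v w ↦ by rw [h], fun h ↦ LinearMap.ext fun v ↦ ext_inner_right ℝ (h v)⟩

end SkewAdjoint

/-- An action of the Clifford algebra of a real inner product space `U` on another one `V`, given by
the multiplication `c x` by each vector `x`. The sign convention is `x·x = -‖x‖²`, and vectors act
by skew-adjoint endomorphisms. -/
structure IsCliffordAction {U V : Type*} [NormedAddCommGroup U] [InnerProductSpace ℝ U]
    [NormedAddCommGroup V] [InnerProductSpace ℝ V] (c : U →ₗ[ℝ] Module.End ℝ V) : Prop where
  mem_skewAdjoint (x : U) : c x ∈ (innerₗ V).skewAdjointSubmodule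
  apply_apply_self (x : U) (v : V) : c x (c x v) = -(⟪x, x⟫ • v)

section CliffordAction

variable {U V : Type*} [NormedAddCommGroup U] [InnerProductSpace ℝ U]
  [NormedAddCommGroup V] [InnerProductSpace ℝ V] {c : U →ₗ[ℝ] Module.End ℝ V}
  {j : Module.End ℝ V} {φ : V} {J : U →ₗ[ℝ] U}

namespace IsCliffordAction

lemma inner_apply_self (hc : IsCliffordAction c) (x : U) (v : V) :
    ⟪c x v, c x v⟫ = ⟪x, x⟫ * ⟪v, v⟫ := by
  rw [inner_map_left_of_mem_skewAdjoint (hc.mem_skewAdjoint x), hc.apply_apply_self,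
    inner_neg_right, neg_neg, real_inner_smul_right]

lemma inner_apply_apply (hc : IsCliffordAction c) (x y : U) (v : V) :
    ⟪c x v, c y v⟫ = ⟪x, y⟫ * ⟪v, v⟫ := by
  have hadd := hc.inner_apply_self (x + y) v
  rw [map_add, LinearMap.add_apply, real_inner_add_add_self, real_inner_add_add_self] at hadd
  linarith [hc.inner_apply_self x v, hc.inner_apply_self y v]

lemma mem_skewAdjoint_of_intertwines (hc : IsCliffordAction c)
    (hj : j ∈ (innerₗ V).skewAdjointSubmodule) (hφ : φ ≠ 0) (hJ : ∀ x, j (c x φ) = c (J x) φ) :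
    J ∈ (innerₗ U).skewAdjointSubmodule := by
  refine mem_skewAdjointSubmodule_innerₗ.mpr fun x y ↦ ?_
  refine mul_right_cancel₀ (inner_self_ne_zero (𝕜 := ℝ).mpr hφ) ?_
  rw [neg_mul, ← hc.inner_apply_apply, ← hc.inner_apply_apply, ← hJ, ← hJ,
    inner_map_left_of_mem_skewAdjoint hj]

lemma inner_apply_add_smul (hc : IsCliffordAction c) (hj : j ∈ (innerₗ V).skewAdjointSubmodule)
    (hanti : ∀ x v, j (c x v) = -c x (j v)) (x y : U) (t : ℝ) :
    ⟪c y (c x φ + t • j φ), φ⟫ = -(⟪x, y⟫ * ⟪φ, φ⟫) := by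
  rw [inner_map_left_of_mem_skewAdjoint (hc.mem_skewAdjoint y), inner_add_left,
    real_inner_smul_left, inner_map_map_eq_zero_of_anticomm hj (hc.mem_skewAdjoint y) (hanti y φ),
    hc.inner_apply_apply, mul_zero, add_zero]

end IsCliffordAction

theorem commutation_criteria_general (hc : IsCliffordAction c)
    (hj : j ∈ (innerₗ V).skewAdjointSubmodule) (hanti : ∀ x v, j (c x v) = -c x (j v))
    (hφ : φ ≠ 0) (hJ : ∀ x, j (c x φ) = c (J x) φ) (S : U →ₗ[ℝ] U) (η : U → ℝ) :
    (S ∘ₗ J = J ∘ₗ S ↔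
      ∀ x y, ⟪c (J y) (c (S x) φ + η x • j φ), φ⟫ =
        -⟪c y (c (S (J x)) φ + η (J x) • j φ), φ⟫) ∧
    (S ∘ₗ J = -(J ∘ₗ S) ↔
      ∀ x y, ⟪c (J y) (c (S x) φ + η x • j φ), φ⟫ =
        ⟪c y (c (S (J x)) φ + η (J x) • j φ), φ⟫) := by
  have hJskew := hc.mem_skewAdjoint_of_intertwines hj hφ hJ
  have hφφ : ⟪φ, φ⟫ ≠ 0 := inner_self_ne_zero.mpr hφ
  simp only [hc.inner_apply_add_smul hj hanti, ← neg_mul, mul_left_inj' hφφ, neg_inj]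
  constructor
  · exact eq_comp_iff_inner_of_mem_skewAdjoint hJskew S (S ∘ₗ J)
  · rw [← neg_eq_iff_eq_neg, eq_comp_iff_inner_of_mem_skewAdjoint hJskew]
    simp only [LinearMap.neg_apply, LinearMap.comp_apply, inner_neg_left, neg_neg]

end CliffordAction

lemma E_mem_skewAdjoint (i j : Fin 8) : E i j ∈ (innerₗ Δ).skewAdjointSubmodule := by
  refine mem_skewAdjointSubmodule_innerₗ.mpr fun v w ↦ ?_
  have hvw : ⟪E i j v, w⟫ = v i * w j - v j * w i := by
    simp [E, inner_sub_left, real_inner_smul_left, EuclideanSpace.inner_single_left]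
  have hwv : ⟪v, E i j w⟫ = v j * w i - v i * w j := by
    simp [E, inner_sub_right, real_inner_smul_right, EuclideanSpace.inner_single_right, mul_comm]
  rw [hvw, hwv, neg_sub]

lemma cliff_mem_skewAdjoint (i : Fin 7) : cliff i ∈ (innerₗ Δ).skewAdjointSubmodule := by
  refine mem_skewAdjointSubmodule_innerₗ.mpr fun v w ↦ ?_
  fin_cases i <;>
  · simp [cliff, inner_add_left, inner_add_right, inner_sub_left, inner_sub_right,
      inner_map_left_of_mem_skewAdjoint (E_mem_skewAdjoint _ _)]
    ring

lemma E_apply (i j : Fin 8) (v : Δ) (k : Fin 8) :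
    E i j v k = (if k = j then v i else 0) - (if k = i then v j else 0) := by
  simp [E]

lemma cliff_apply (i : Fin 7) (v : Δ) :
    cliff i v =
      ![!₂[-v 7, -v 6, v 5, v 4, -v 3, -v 2, v 1, v 0],
        !₂[v 6, -v 7, -v 4, v 5, v 2, -v 3, -v 0, v 1],
        !₂[v 5, -v 4, v 7, -v 6, v 1, -v 0, v 3, -v 2],
        !₂[v 4, v 5, v 6, v 7, -v 0, -v 1, -v 2, -v 3],
        !₂[v 2, v 3, -v 0, -v 1, -v 6, -v 7, v 4, v 5],
        !₂[-v 3, v 2, -v 1, v 0, v 7, -v 6, v 5, -v 4],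
        !₂[-v 1, v 0, v 3, -v 2, v 5, -v 4, -v 7, v 6]] i := by
  fin_cases i <;> ext k <;> fin_cases k <;> simp [cliff, E_apply]

lemma jmap_eq_neg_cliff_six : jmap = -cliff 6 := by
  ext v k
  fin_cases k <;> simp [jmap, cliff_apply]

-- Otherwise unification unfolds `jmap` down to the entries of the `cliff i`.
attribute [local irreducible] jmap

lemma cm6_cm6_self (x : EuclideanSpace ℝ (Fin 6)) (v : Δ) :
    cm6 x (cm6 x v) = -(⟪x, x⟫ • v) := by
  ext k
  fin_cases k <;>
  · simp [cm6, cliff_apply, Fin.sum_univ_six, PiLp.inner_apply, -inner_self_eq_norm_sq_to_K]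
    ring

lemma cliff_six_cm6 (x : EuclideanSpace ℝ (Fin 6)) (v : Δ) :
    cliff 6 (cm6 x v) = -cm6 x (cliff 6 v) := by
  ext k
  fin_cases k <;>
    simp [cm6, cliff_apply, Fin.sum_univ_six] <;>
    ring

/-- The multiplication `cm6` of spinors by vectors of `ℝ⁶`, bundled as a linear map into the
endomorphisms of `Δ`. -/
def cm6Hom : EuclideanSpace ℝ (Fin 6) →ₗ[ℝ] Module.End ℝ Δ :=
  LinearMap.mk₂ ℝ cm6
    (fun x y v ↦ by simp only [cm6, PiLp.add_apply, add_smul, Finset.sum_add_distrib])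
    (fun a x v ↦ by simp only [cm6, PiLp.smul_apply, smul_assoc, Finset.smul_sum])
    (fun x v w ↦ by simp only [cm6, map_add, smul_add, Finset.sum_add_distrib])
    (fun a x v ↦ by simp only [cm6, map_smul, smul_comm _ a, Finset.smul_sum])

lemma cm6Hom_apply (x : EuclideanSpace ℝ (Fin 6)) (v : Δ) : cm6Hom x v = cm6 x v := rfl

lemma cm6Hom_eq_sum (x : EuclideanSpace ℝ (Fin 6)) :
    cm6Hom x = ∑ i : Fin 6, x i • cliff i.castSucc := by
  ext1 v
  simp only [cm6Hom_apply, cm6, LinearMap.sum_apply, LinearMap.smul_apply]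

lemma isCliffordAction_cm6Hom : IsCliffordAction cm6Hom where
  mem_skewAdjoint x := by
    rw [cm6Hom_eq_sum]
    exact sum_mem fun i _ ↦ Submodule.smul_mem _ _ (cliff_mem_skewAdjoint i.castSucc)
  apply_apply_self := cm6_cm6_self

lemma jmap_mem_skewAdjoint : jmap ∈ (innerₗ Δ).skewAdjointSubmodule := by
  rw [jmap_eq_neg_cliff_six]
  exact neg_mem (cliff_mem_skewAdjoint 6)

lemma jmap_cm6Hom (x : EuclideanSpace ℝ (Fin 6)) (v : Δ) :
    jmap (cm6Hom x v) = -cm6Hom x (jmap v) := by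
  rw [jmap_eq_neg_cliff_six, LinearMap.neg_apply, LinearMap.neg_apply, map_neg, cm6Hom_apply,
    cm6Hom_apply, cliff_six_cm6]

/-- Commutation criteria: with ν(x) := S(x)·φ + η(x)·j(φ), S commutes with J_φ iff
⟨(J_φ y)·ν(x), φ⟩ = -⟨y·ν(J_φ x), φ⟩ for all x, y, and anti-commutes with J_φ iff
⟨(J_φ y)·ν(x), φ⟩ = ⟨y·ν(J_φ x), φ⟩ for all x, y. Here J_φ is the unique linear map
with j(x·φ) = (J_φ x)·φ. -/
theorem commutation_criteria (φ : Δ) (hφ : ⟪φ, φ⟫ = 1)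
    (J : EuclideanSpace ℝ (Fin 6) →ₗ[ℝ] EuclideanSpace ℝ (Fin 6))
    (hJ : ∀ x : EuclideanSpace ℝ (Fin 6), jmap (cm6 x φ) = cm6 (J x) φ)
    (S : EuclideanSpace ℝ (Fin 6) →ₗ[ℝ] EuclideanSpace ℝ (Fin 6))
    (η : EuclideanSpace ℝ (Fin 6) →ₗ[ℝ] ℝ) :
    (S ∘ₗ J = J ∘ₗ S ↔
      (∀ x y : EuclideanSpace ℝ (Fin 6),
        ⟪cm6 (J y) (cm6 (S x) φ + η x • jmap φ), φ⟫ =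
          -⟪cm6 y (cm6 (S (J x)) φ + η (J x) • jmap φ), φ⟫)) ∧
    (S ∘ₗ J = -(J ∘ₗ S) ↔
      (∀ x y : EuclideanSpace ℝ (Fin 6),
        ⟪cm6 (J y) (cm6 (S x) φ + η x • jmap φ), φ⟫ =
          ⟪cm6 y (cm6 (S (J x)) φ + η (J x) • jmap φ), φ⟫)) := by
  have hφ0 : φ ≠ 0 := inner_self_ne_zero (𝕜 := ℝ).mp (hφ.trans_ne one_ne_zero)
  exact commutation_criteria_general isCliffordAction_cm6Hom jmap_mem_skewAdjoint jmap_cm6Hom hφ0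
    hJ S η

end
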